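/- Let Λ ⊆ {1,…,d} be any index set of size k, and let x̃ be a minimizer of ‖Ax − y‖₂ over all vectors x ∈ ℝ^d whose support is contained in Λ. If x̃ has exactly k nonzero entries, then x̃ is a local minimum of the objective F2_λ(x) = (1/2)‖Ax − y‖₂² + λ τ_k(x) for every λ ≥ λ̄ = ‖y‖₂ · max_{1≤i≤d} ‖a_i‖₂, and likewise x̃ is a local minimum of F1_λ(x) = ‖Ax − y‖₂ + λ τ_k(x) for every λ ≥ β = max_{1≤i≤d} ‖a_i‖₂. -/

import Mathlib

open Finset Filter Topology

/-- Euclidean (ℓ₂) norm of a vector in ℝ^m. -/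
noncomputable def l2norm {m : ℕ} (v : Fin m → ℝ) : ℝ := Real.sqrt (∑ i, v i ^ 2)

/-- The trimmed lasso penalty: the minimum, over index sets Λ of size d − k,
of the ℓ₁ norm of x restricted to Λ. -/
noncomputable def tauTL {d : ℕ} (k : ℕ) (x : Fin d → ℝ) : ℝ :=
  sInf ((fun Λ : Finset (Fin d) => ∑ i ∈ Λ, |x i|) '' {Λ : Finset (Fin d) | Λ.card = d - k})

lemma l2norm_eq_norm {m : ℕ} (v : Fin m → ℝ) : l2norm v = ‖WithLp.toLp 2 v‖ := by
  simp [l2norm, EuclideanSpace.norm_eq]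

lemma l2norm_nonneg {m : ℕ} (v : Fin m → ℝ) : 0 ≤ l2norm v := Real.sqrt_nonneg _

lemma l2norm_sub_le {m : ℕ} (v w : Fin m → ℝ) : l2norm (v - w) ≤ l2norm v + l2norm w := by
  simpa only [l2norm_eq_norm, WithLp.toLp_sub] using norm_sub_le _ _

/-- `‖A w‖₂` is at most the largest column norm times the ℓ₁ norm of `w`. -/
lemma l2norm_mulVec_le {n d : ℕ} (A : Matrix (Fin n) (Fin d) ℝ) (w : Fin d → ℝ) :
    l2norm (A.mulVec w) ≤ (⨆ i : Fin d, l2norm (fun j => A j i)) * ∑ i, |w i| := by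
  have hA : WithLp.toLp 2 (A.mulVec w) =
      ∑ i, w i • (WithLp.toLp 2 (fun j => A j i) : EuclideanSpace ℝ (Fin n)) := by
    ext j
    simp [Matrix.mulVec, dotProduct, mul_comm]
  rw [l2norm_eq_norm, hA, Finset.mul_sum]
  refine (norm_sum_le _ _).trans (Finset.sum_le_sum fun i _ => ?_)
  rw [norm_smul, Real.norm_eq_abs, mul_comm, ← l2norm_eq_norm]
  exact mul_le_mul_of_nonneg_right
    (le_ciSup (f := fun i => l2norm (fun j => A j i)) (Set.finite_range _).bddAbove i)
    (abs_nonneg _)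

lemma tauTL_le {d k : ℕ} (x : Fin d → ℝ) {S : Finset (Fin d)} (hS : S.card = d - k) :
    tauTL k x ≤ ∑ i ∈ S, |x i| := by
  refine csInf_le ⟨0, ?_⟩ ⟨S, hS, rfl⟩
  rintro _ ⟨T, -, rfl⟩
  exact Finset.sum_nonneg fun i _ => abs_nonneg _

/-- If the entries of `x` on `Λ` dominate those off `Λ`, then `τ_k(x)` is at least the ℓ₁ norm
of `x` off `Λ`. -/
lemma sum_compl_le_tauTL {d k : ℕ} (x : Fin d → ℝ) {Λ : Finset (Fin d)} (hΛ : Λ.card = k)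
    (hne : Λ.Nonempty) (hdom : ∀ i ∈ Λ, ∀ j ∉ Λ, |x j| ≤ |x i|) :
    ∑ i ∈ Λᶜ, |x i| ≤ tauTL k x := by
  have hcompl : Λᶜ.card = d - k := by rw [Finset.card_compl, hΛ, Fintype.card_fin]
  refine le_csInf ⟨_, Λᶜ, hcompl, rfl⟩ ?_
  rintro _ ⟨S, hS, rfl⟩
  obtain ⟨i₀, hi₀, hmin⟩ := Λ.exists_min_image (fun i => |x i|) hne
  have hcard : (Λᶜ \ S).card = (S \ Λᶜ).card :=
    Finset.card_sdiff_comm (hcompl.trans (Eq.symm hS))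
  have hoff : ∑ i ∈ Λᶜ \ S, |x i| ≤ (Λᶜ \ S).card • |x i₀| :=
    Finset.sum_le_card_nsmul _ _ _ fun j hj => hdom i₀ hi₀ j (by simp at hj; exact hj.1)
  have hon : (S \ Λᶜ).card • |x i₀| ≤ ∑ i ∈ S \ Λᶜ, |x i| :=
    Finset.card_nsmul_le_sum _ _ _ fun j hj => hmin j (by simp at hj; exact hj.2)
  rw [hcard] at hoff
  have h₁ := Finset.sum_inter_add_sum_sdiff Λᶜ S (fun i => |x i|)
  have h₂ := Finset.sum_inter_add_sum_sdiff S Λᶜ (fun i => |x i|)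
  rw [Finset.inter_comm] at h₂
  show _ ≤ ∑ i ∈ S, |x i|
  linarith

/-- Entries that are nonzero exactly on `Λ` dominate, near `xt`, the entries off `Λ`. -/
lemma eventually_abs_le_abs {d : ℕ} {xt : Fin d → ℝ} {Λ : Finset (Fin d)}
    (hoff : ∀ i ∉ Λ, xt i = 0) (hon : ∀ i ∈ Λ, xt i ≠ 0) :
    ∀ᶠ x in 𝓝 xt, ∀ i ∈ Λ, ∀ j ∉ Λ, |x j| ≤ |x i| := by
  simp only [eventually_all]
  intro i hi j hj
  have hlt : |xt j| < |xt i| := by simpa [hoff j hj] using hon i hi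
  have hcont (l : Fin d) : ContinuousAt (fun x : Fin d → ℝ => |x l|) xt :=
    (continuous_apply l).abs.continuousAt
  exact ((hcont j).eventually_lt (hcont i) hlt).mono fun _ => le_of_lt

/-- A least-squares residual over vectors supported in `Λ` exceeds any other residual by at most
the largest column norm times the ℓ₁ norm off `Λ`. -/
lemma l2norm_residual_le {n d : ℕ} (A : Matrix (Fin n) (Fin d) ℝ) (y : Fin n → ℝ)
    (Λ : Finset (Fin d)) (xt : Fin d → ℝ)
    (hminres : ∀ x : Fin d → ℝ, (∀ i : Fin d, i ∉ Λ → x i = 0) →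
      l2norm (A.mulVec xt - y) ≤ l2norm (A.mulVec x - y)) (x : Fin d → ℝ) :
    l2norm (A.mulVec xt - y) ≤ l2norm (A.mulVec x - y) +
      (⨆ i : Fin d, l2norm (fun j => A j i)) * ∑ i ∈ Λᶜ, |x i| := by
  set w : Fin d → ℝ := fun i => if i ∈ Λᶜ then x i else 0 with hw
  have hsum : ∑ i, |w i| = ∑ i ∈ Λᶜ, |x i| := by
    simp only [hw, apply_ite abs, abs_zero, Finset.sum_ite_mem, Finset.univ_inter]
  have hres : A.mulVec (x - w) - y = (A.mulVec x - y) - A.mulVec w := by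
    rw [Matrix.mulVec_sub]; abel
  have hz := hminres (x - w) fun i hi => by simp [hw, hi]
  rw [hres] at hz
  rw [← hsum]
  linarith [l2norm_sub_le (A.mulVec x - y) (A.mulVec w), l2norm_mulVec_le A w]

/-- Let Λ be an index set of size k and x̃ a minimizer of ‖Ax − y‖₂ over
vectors supported in Λ. If x̃ has exactly k nonzero entries, then x̃ is a local
minimum of F2_λ for every λ ≥ λ̄ = ‖y‖₂ · maxᵢ ‖aᵢ‖₂, and a local minimum of
F1_λ for every λ ≥ β = maxᵢ ‖aᵢ‖₂. -/
theorem stmt3 {n d : ℕ} (k : ℕ) (hk : 0 < k) (hkd : k < d)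
    (A : Matrix (Fin n) (Fin d) ℝ) (y : Fin n → ℝ)
    (Λ : Finset (Fin d)) (hΛ : Λ.card = k)
    (xt : Fin d → ℝ)
    (hsupp : ∀ i : Fin d, i ∉ Λ → xt i = 0)
    (hminres : ∀ x : Fin d → ℝ, (∀ i : Fin d, i ∉ Λ → x i = 0) →
      l2norm (A.mulVec xt - y) ≤ l2norm (A.mulVec x - y))
    (hcard : Set.ncard {i : Fin d | xt i ≠ 0} = k) :
    (∀ lam : ℝ, l2norm y * (⨆ i : Fin d, l2norm (fun j => A j i)) ≤ lam →
      IsLocalMin (fun x : Fin d → ℝ =>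
        (1 / 2) * (l2norm (A.mulVec x - y)) ^ 2 + lam * tauTL k x) xt) ∧
    (∀ lam : ℝ, (⨆ i : Fin d, l2norm (fun j => A j i)) ≤ lam →
      IsLocalMin (fun x : Fin d → ℝ =>
        l2norm (A.mulVec x - y) + lam * tauTL k x) xt) := by
  have hon : ∀ i ∈ Λ, xt i ≠ 0 := by
    have hsub : {i | xt i ≠ 0} ⊆ (Λ : Set (Fin d)) := fun i hi => by
      by_contra h
      exact hi (hsupp i h)
    have heq := Set.eq_of_subset_of_ncard_le hsub (by rw [hcard, Set.ncard_coe_finset, hΛ])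
    intro i hi
    have hmem : i ∈ {i | xt i ≠ 0} := heq ▸ hi
    exact hmem
  have hne : Λ.Nonempty := Finset.card_pos.mp (hΛ ▸ hk)
  have htau : tauTL k xt ≤ 0 := by
    refine (tauTL_le xt (S := Λᶜ) (by rw [Finset.card_compl, hΛ, Fintype.card_fin])).trans_eq ?_
    exact Finset.sum_eq_zero fun i hi => by simp [hsupp i (Finset.mem_compl.mp hi)]
  have hβ : 0 ≤ ⨆ i : Fin d, l2norm (fun j => A j i) :=
    Real.iSup_nonneg fun i => l2norm_nonneg _
  have hry : l2norm (A.mulVec xt - y) ≤ l2norm y := by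
    simpa [l2norm] using hminres 0 fun _ _ => rfl
  constructor
  · intro lam hlam
    filter_upwards [eventually_abs_le_abs hsupp hon] with x hx
    have hT := sum_compl_le_tauTL x hΛ hne hx
    have hT₀ : 0 ≤ ∑ i ∈ Λᶜ, |x i| := Finset.sum_nonneg fun i _ => abs_nonneg _
    have hr := l2norm_residual_le A y Λ xt hminres x
    have hr₀ := l2norm_nonneg (A.mulVec xt - y)
    have hlam₀ : 0 ≤ lam := (mul_nonneg (l2norm_nonneg y) hβ).trans hlam
    generalize l2norm (A.mulVec xt - y) = r at *
    generalize l2norm (A.mulVec x - y) = s at *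
    generalize (⨆ i : Fin d, l2norm (fun j => A j i)) = β at *
    generalize ∑ i ∈ Λᶜ, |x i| = T at *
    have h₁ : lam * tauTL k xt ≤ 0 := mul_nonpos_of_nonneg_of_nonpos hlam₀ htau
    have h₂ : lam * T ≤ lam * tauTL k x := mul_le_mul_of_nonneg_left hT hlam₀
    have h₃ : r * β * T ≤ lam * T :=
      mul_le_mul_of_nonneg_right ((mul_le_mul_of_nonneg_right hry hβ).trans hlam) hT₀
    have h₄ : r * r ≤ r * (s + β * T) := mul_le_mul_of_nonneg_left hr hr₀
    nlinarith [sq_nonneg (r - s)]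
  · intro lam hlam
    filter_upwards [eventually_abs_le_abs hsupp hon] with x hx
    have hT := sum_compl_le_tauTL x hΛ hne hx
    have hT₀ : 0 ≤ ∑ i ∈ Λᶜ, |x i| := Finset.sum_nonneg fun i _ => abs_nonneg _
    have hr := l2norm_residual_le A y Λ xt hminres x
    have hlam₀ : 0 ≤ lam := hβ.trans hlam
    have h₁ : lam * tauTL k xt ≤ 0 := mul_nonpos_of_nonneg_of_nonpos hlam₀ htau
    linarith [mul_le_mul_of_nonneg_left hT hlam₀, mul_le_mul_of_nonneg_right hlam hT₀]
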